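/- arXiv:0807.0027 — 4 statements merged into one kernel-verified Lean document; each statement's English description precedes it below -/
import Mathlib

section
/- Let G be a finite subgroup of SL(2,ℂ). If G is not abelian, then G contains the matrix −I (the negative of the 2×2 identity matrix). -/
/-!
An element of order two in `SL(2, R)`, for `R` a domain with `2 ≠ 0`, is `-1`, so it suffices to
see that a group `G` of odd order is abelian. If it is not, then only scalar matrices commute with
all of `G`. The matrix `∑ g`, fixed by multiplication with `G`, is therefore a scalar, hence zero,
and the scalar matrix `∑ g, g * h * g⁻¹` has trace `|G| * tr h`, so that twice it is `|G| * tr h`.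
Substituting `u = g * h` in `∑ g, ∑ h, g * h * g⁻¹ * h` gives `∑ u, u * (∑ g, g⁻²) * u`, which
vanishes since squaring permutes `G`; so `|G| • ∑ h, tr h • h = 0`. But the Cayley-Hamilton identity
`tr h • h = h ^ 2 + 1` evaluates the left-hand side to `|G| ^ 2 ≠ 0`.
-/

section GroupSums

variable {G A : Type*} [Group G] [Fintype G]

theorem sum_comp_sq_of_odd_card [AddCommMonoid A] (hodd : Odd (Nat.card G)) (f : G → A) :
    ∑ g, f (g ^ 2) = ∑ g, f g :=
  (powCoprime hodd.coprime_two_right).sum_comp f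

variable [Semiring A] (ρ : G →* A)

theorem map_mul_sum_map (h : G) : ρ h * ∑ g, ρ g = ∑ g, ρ g := by
  simp_rw [Finset.mul_sum, ← map_mul]
  exact Equiv.sum_comp (Equiv.mulLeft h) (ρ ·)

theorem sum_map_mul_map (h : G) : (∑ g, ρ g) * ρ h = ∑ g, ρ g := by
  simp_rw [Finset.sum_mul, ← map_mul]
  exact Equiv.sum_comp (Equiv.mulRight h) (ρ ·)

theorem commute_map_sum_conj (x : A) (h : G) : Commute (ρ h) (∑ g, ρ g * x * ρ g⁻¹) := by
  rw [commute_iff_eq, Finset.mul_sum, Finset.sum_mul]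
  refine Fintype.sum_equiv (Equiv.mulLeft h) _ _ fun g => ?_
  have inv_mul_cancel_map : ρ h⁻¹ * ρ h = 1 := by rw [← map_mul, inv_mul_cancel, map_one]
  simp only [Equiv.coe_mulLeft, mul_inv_rev, map_mul, mul_assoc, inv_mul_cancel_map, mul_one]

theorem sum_sum_conj_mul_self :
    ∑ h, (∑ g, ρ g * ρ h * ρ g⁻¹) * ρ h = ∑ u, ρ u * (∑ g, ρ (g ^ 2)) * ρ u := by
  calc ∑ h, (∑ g, ρ g * ρ h * ρ g⁻¹) * ρ h
      = ∑ g, ∑ h, ρ (g * h * (g⁻¹) ^ 2 * (g * h)) := by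
        simp_rw [Finset.sum_mul, ← map_mul]
        rw [Finset.sum_comm]
        refine Fintype.sum_congr _ _ fun g => Fintype.sum_congr _ _ fun h => ?_
        congr 1
        group
    _ = ∑ g : G, ∑ u, ρ (u * (g⁻¹) ^ 2 * u) :=
        Fintype.sum_congr _ _ fun g =>
          Equiv.sum_comp (Equiv.mulLeft g) fun u => ρ (u * (g⁻¹) ^ 2 * u)
    _ = ∑ g : G, ∑ u, ρ (u * g ^ 2 * u) :=
        Equiv.sum_comp (Equiv.inv G) fun g => ∑ u, ρ (u * g ^ 2 * u)
    _ = ∑ u, ρ u * (∑ g, ρ (g ^ 2)) * ρ u := by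
        rw [Finset.sum_comm]
        simp_rw [Finset.mul_sum, Finset.sum_mul, ← map_mul]

end GroupSums

open Matrix

section ScalarCommutant

variable {G n R : Type*} [Fintype n] [DecidableEq n] [CommRing R]

/-- The property that Schur's lemma provides for absolutely irreducible representations: only
scalar matrices commute with every `ρ g`. -/
def HasScalarCommutant [Monoid G] (ρ : G →* Matrix n n R) : Prop :=
  ∀ M, (∀ g, Commute (ρ g) M) → M ∈ Set.range (scalar n)

theorem card_smul_eq_trace_smul_one {M : Matrix n n R} (hM : M ∈ Set.range (scalar n)) :
    (Fintype.card n : R) • M = M.trace • (1 : Matrix n n R) := by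
  obtain ⟨c, rfl⟩ := hM
  simp [← smul_one_eq_diagonal, smul_smul, mul_comm]

variable [Group G] [Fintype G] {ρ : G →* Matrix n n R}

theorem trace_sum_conj (ρ : G →* Matrix n n R) (X : Matrix n n R) :
    (∑ g, ρ g * X * ρ g⁻¹).trace = Nat.card G * X.trace := by
  have trace_conj (g : G) : (ρ g * X * ρ g⁻¹).trace = X.trace := by
    rw [trace_mul_cycle, ← map_mul, inv_mul_cancel, map_one, one_mul]
  simp [trace_sum, trace_conj]

namespace HasScalarCommutant

theorem card_smul_sum_conj (hρ : HasScalarCommutant ρ) (X : Matrix n n R) :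
    (Fintype.card n : R) • ∑ g, ρ g * X * ρ g⁻¹ =
      (Nat.card G * X.trace) • (1 : Matrix n n R) := by
  rw [card_smul_eq_trace_smul_one (hρ _ (commute_map_sum_conj ρ X)), trace_sum_conj]

theorem sum_map_eq_zero [IsDomain R] (hρ : HasScalarCommutant ρ) (hρ_ne_one : ρ ≠ 1) :
    ∑ g, ρ g = 0 := by
  obtain ⟨c, hc⟩ := hρ (∑ g, ρ g) fun h =>
    (map_mul_sum_map ρ h).trans (sum_map_mul_map ρ h).symm
  rw [scalar_apply, ← smul_one_eq_diagonal] at hc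
  have smul_map (h : G) : c • ρ h = c • (1 : Matrix n n R) := by
    simpa [← hc] using map_mul_sum_map ρ h
  have c_eq_zero : c = 0 := by
    by_contra c_ne_zero
    exact hρ_ne_one <| MonoidHom.ext fun h => smul_right_injective _ c_ne_zero (smul_map h)
  rw [← hc, c_eq_zero, zero_smul]

theorem card_smul_sum_trace_smul_map_eq_zero [IsDomain R] (hρ : HasScalarCommutant ρ)
    (hρ_ne_one : ρ ≠ 1) (hodd : Odd (Nat.card G)) :
    (Nat.card G : R) • ∑ h, (ρ h).trace • ρ h = 0 := by
  calc (Nat.card G : R) • ∑ h, (ρ h).trace • ρ h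
      = ∑ h, ((Fintype.card n : R) • ∑ g, ρ g * ρ h * ρ g⁻¹) * ρ h := by
        simp_rw [hρ.card_smul_sum_conj, smul_one_mul, mul_smul, Finset.smul_sum]
    _ = (Fintype.card n : R) • ∑ u, ρ u * (∑ g, ρ (g ^ 2)) * ρ u := by
        simp_rw [smul_mul_assoc, ← Finset.smul_sum, sum_sum_conj_mul_self]
    _ = 0 := by
        rw [sum_comp_sq_of_odd_card hodd (ρ ·), hρ.sum_map_eq_zero hρ_ne_one]
        simp only [mul_zero, zero_mul, Finset.sum_const_zero, smul_zero]

end HasScalarCommutant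

end ScalarCommutant

section TwoByTwo

variable {R : Type*} [CommRing R]

theorem trace_smul_self_fin_two (A : Matrix (Fin 2) (Fin 2) R) :
    A.trace • A = A ^ 2 + A.det • (1 : Matrix (Fin 2) (Fin 2) R) := by
  nontriviality R
  have cayley_hamilton : A ^ 2 - A.trace • A + A.det • (1 : Matrix (Fin 2) (Fin 2) R) = 0 := by
    simpa [charpoly_fin_two, Algebra.smul_def] using A.aeval_self_charpoly
  rw [sub_add_eq_add_sub, sub_eq_zero] at cayley_hamilton
  exact cayley_hamilton.symm

theorem mem_range_scalar_fin_two_iff {M : Matrix (Fin 2) (Fin 2) R} :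
    M ∈ Set.range (scalar (Fin 2)) ↔ M 0 1 = 0 ∧ M 1 0 = 0 ∧ M 0 0 - M 1 1 = 0 := by
  constructor
  · rintro ⟨c, rfl⟩
    simp
  · rintro ⟨h01, h10, hdiag⟩
    refine ⟨M 0 0, ?_⟩
    ext i j
    fin_cases i <;> fin_cases j <;> simp [h01, h10, sub_eq_zero.mp hdiag]

theorem exists_smul_eq_smul_add_smul_one_of_commute {M : Matrix (Fin 2) (Fin 2) R}
    (hM : M ∉ Set.range (scalar (Fin 2))) :
    ∃ d : R, d ≠ 0 ∧ ∀ A, Commute A M →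
      ∃ c e : R, d • A = c • M + e • (1 : Matrix (Fin 2) (Fin 2) R) := by
  -- Each of the functionals `M 0 1`, `M 1 0` and `M 0 0 - M 1 1` kills the scalar matrices; take
  -- for `d` and `c` the values at `M` and at `A` of one that does not kill `M`.
  have smul_eq {A : Matrix (Fin 2) (Fin 2) R} (hA : Commute A M) :
      M 0 1 • A = A 0 1 • M + (M 0 1 * A 0 0 - A 0 1 * M 0 0) • 1 ∧
      M 1 0 • A = A 1 0 • M + (M 1 0 * A 0 0 - A 1 0 * M 0 0) • 1 ∧
      (M 0 0 - M 1 1) • A = (A 0 0 - A 1 1) • M + (A 1 1 * M 0 0 - M 1 1 * A 0 0) • 1 := by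
    simp only [commute_iff_eq, ← Matrix.ext_iff, Fin.forall_fin_two, mul_apply, Fin.sum_univ_two]
      at hA
    simp only [← Matrix.ext_iff, Fin.forall_fin_two, Matrix.smul_apply, smul_eq_mul,
      Matrix.add_apply, one_apply_eq, ne_eq, zero_ne_one, one_ne_zero, not_false_eq_true,
      one_apply_ne, mul_zero, add_zero, mul_one]
    grind
  simp only [mem_range_scalar_fin_two_iff, not_and_or] at hM
  rcases hM with h01 | h10 | hdiag
  · exact ⟨_, h01, fun A hA => ⟨_, _, (smul_eq hA).1⟩⟩
  · exact ⟨_, h10, fun A hA => ⟨_, _, (smul_eq hA).2.1⟩⟩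
  · exact ⟨_, hdiag, fun A hA => ⟨_, _, (smul_eq hA).2.2⟩⟩

variable [IsDomain R]

theorem commute_of_commute_of_notMem_range_scalar {A B M : Matrix (Fin 2) (Fin 2) R}
    (hM : M ∉ Set.range (scalar (Fin 2))) (hA : Commute A M) (hB : Commute B M) :
    Commute A B := by
  obtain ⟨d, d_ne_zero, hd⟩ := exists_smul_eq_smul_add_smul_one_of_commute hM
  obtain ⟨c, e, smul_A⟩ := hd A hA
  have commute_smul : Commute (d • A) B := by
    rw [smul_A]
    exact (hB.symm.smul_left c).add_left ((Commute.one_left B).smul_left e)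
  refine smul_right_injective _ d_ne_zero ?_
  simpa only [smul_mul_assoc, mul_smul_comm] using commute_smul.eq

theorem hasScalarCommutant_of_not_commute {G : Type*} [Monoid G]
    {ρ : G →* Matrix (Fin 2) (Fin 2) R} {a b : G} (hab : ¬ Commute (ρ a) (ρ b)) :
    HasScalarCommutant ρ := fun M hM => by
  by_contra hM_not_scalar
  exact hab (commute_of_commute_of_notMem_range_scalar hM_not_scalar (hM a) (hM b))

theorem commute_map_of_odd_card {G : Type*} [Group G] {ρ : G →* Matrix (Fin 2) (Fin 2) R}
    (hdet : ∀ g, (ρ g).det = 1) (hodd : Odd (Nat.card G)) (hcard : (Nat.card G : R) ≠ 0)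
    (a b : G) : Commute (ρ a) (ρ b) := by
  by_contra hab
  have := Nat.finite_of_card_ne_zero hodd.pos.ne'
  have := Fintype.ofFinite G
  have scalar_commutant := hasScalarCommutant_of_not_commute hab
  have ρ_ne_one : ρ ≠ 1 := by
    rintro rfl
    exact hab (Commute.one_left _)
  have sum_trace_smul : ∑ h, (ρ h).trace • ρ h = (Nat.card G : R) • 1 := by
    simp_rw [trace_smul_self_fin_two, hdet, one_smul, Finset.sum_add_distrib, ← map_pow,
      sum_comp_sq_of_odd_card hodd (ρ ·), scalar_commutant.sum_map_eq_zero ρ_ne_one]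
    simp [Nat.cast_smul_eq_nsmul]
  have card_sq_smul_one := scalar_commutant.card_smul_sum_trace_smul_map_eq_zero ρ_ne_one hodd
  rw [sum_trace_smul] at card_sq_smul_one
  exact smul_ne_zero hcard (smul_ne_zero hcard one_ne_zero) card_sq_smul_one

theorem eq_one_or_eq_neg_one_of_sq_eq_one {A : Matrix (Fin 2) (Fin 2) R} (htwo : (2 : R) ≠ 0)
    (hdet : A.det = 1) (hA : A ^ 2 = 1) : A = 1 ∨ A = -1 := by
  have trace_smul : A.trace • A = (2 : R) • (1 : Matrix (Fin 2) (Fin 2) R) := by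
    rw [trace_smul_self_fin_two, hA, hdet, one_smul, two_smul]
  have trace_sq : A.trace ^ 2 = 2 ^ 2 := by
    simpa [det_smul, hdet] using congrArg det trace_smul
  have cancel_two := smul_right_injective (Matrix (Fin 2) (Fin 2) R) htwo
  refine (sq_eq_sq_iff_eq_or_eq_neg.mp trace_sq).imp (fun trace_eq => ?_) fun trace_eq => ?_
  · exact cancel_two (trace_eq ▸ trace_smul)
  · refine cancel_two ?_
    simpa only [trace_eq, neg_smul, smul_neg, neg_eq_iff_eq_neg] using trace_smul

theorem neg_one_mem_of_even_card {G : Subgroup (SpecialLinearGroup (Fin 2) R)} [Finite G]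
    (htwo : (2 : R) ≠ 0) (heven : Even (Nat.card G)) : -1 ∈ G := by
  have : Fact (Nat.Prime 2) := ⟨Nat.prime_two⟩
  obtain ⟨⟨A, hA⟩, orderOf_A⟩ := exists_prime_orderOf_dvd_card' 2 heven.two_dvd
  rw [Subgroup.orderOf_mk, orderOf_eq_prime_iff] at orderOf_A
  obtain ⟨A_sq, A_ne_one⟩ := orderOf_A
  have coe_A_sq : (A : Matrix (Fin 2) (Fin 2) R) ^ 2 = 1 := by
    simpa using congrArg SpecialLinearGroup.coeMonoidHom A_sq
  have A_eq_neg_one : A = -1 := Subtype.ext <|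
    (eq_one_or_eq_neg_one_of_sq_eq_one htwo A.det_coe coe_A_sq).resolve_left
      fun coe_A_eq_one => A_ne_one (Subtype.ext coe_A_eq_one)
  exact A_eq_neg_one ▸ hA

end TwoByTwo

/-- `Nat.card` of an infinite group is `0`, so `hcard` says that `G` is finite, of order not
divisible by the characteristic of `R`. -/
theorem nonabelian_finite_subgroup_SL2_contains_neg_one_general
    {R : Type*} [CommRing R] [IsDomain R] (G : Subgroup (SpecialLinearGroup (Fin 2) R))
    (hcard : (Nat.card G : R) ≠ 0) (h : ¬ ∀ a ∈ G, ∀ b ∈ G, a * b = b * a) :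
    -1 ∈ G := by
  have := Nat.finite_of_card_ne_zero (ne_zero_of_map (f := Nat.castRingHom R) hcard)
  rcases Nat.even_or_odd (Nat.card G) with heven | hodd
  · have two_ne_zero : (2 : R) ≠ 0 := by
      obtain ⟨m, hm⟩ := heven.two_dvd
      rw [hm, Nat.cast_mul] at hcard
      exact_mod_cast left_ne_zero_of_mul hcard
    exact neg_one_mem_of_even_card two_ne_zero heven
  · refine absurd (fun a ha b hb => SpecialLinearGroup.coeMonoidHom_injective ?_) h
    simpa using (commute_map_of_odd_card (ρ := SpecialLinearGroup.coeMonoidHom.comp G.subtype)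
      (fun g => g.1.det_coe) hodd hcard ⟨a, ha⟩ ⟨b, hb⟩).eq

/-- Let `G` be a finite subgroup of `SL(2,ℂ)`. If `G` is not abelian, then `G` contains the
matrix `-I` (the negative of the 2×2 identity matrix). -/
theorem nonabelian_finite_subgroup_SL2_contains_neg_one
    (G : Subgroup (Matrix.SpecialLinearGroup (Fin 2) ℂ)) [Finite G]
    (h : ¬ ∀ a ∈ G, ∀ b ∈ G, a * b = b * a) :
    ∃ A ∈ G, (A : Matrix (Fin 2) (Fin 2) ℂ) = -1 :=
  ⟨-1, nonabelian_finite_subgroup_SL2_contains_neg_one_general G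
    (Nat.cast_ne_zero.mpr Nat.card_pos.ne') h, by simp⟩
end

section
/- Let Γ be a nonabelian finite subgroup of GL(2,ℂ) which contains no scalar matrix aI with a ≠ 1. Then there exist a natural number n ≥ 1 and a matrix U ∈ GL(2,ℂ) such that U⁻¹ΓU = Γₙ, where, setting ρ = exp(2πi/(2n+1)), Γₙ is the subgroup consisting of the diagonal matrices [[ρ^k, 0], [0, ρ^{−k}]] for 0 ≤ k ≤ 2n together with the antidiagonal matrices [[0, ρ^{−k}], [ρ^k, 0]] for 0 ≤ k ≤ 2n (a group of order 4n+2). -/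
open Matrix

/-!
If a 2-dimensional representation has determinant one, its character satisfies
`χ(g) χ(g⁻¹) = χ(g²) + 2`. Averaging over a group of odd order, where squaring is a bijection,
gives `dim End_G V = dim V^G + 2`. So there is a nonscalar endomorphism commuting with the group,
and as the commutant of a nonscalar `2 × 2` matrix is commutative, the group is abelian.

An involution of determinant one is scalar, so `Γ ∩ SL₂` has odd order and is abelian. A nontrivial
commutator `s` of `Γ` lies in it and has two distinct eigenvalues. For `g ∈ Γ` the conjugate
`g s g⁻¹` commutes with `s` and has the same characteristic polynomial, so it is `s` or `s⁻¹`. In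
the second case `g²` commutes with `s` while `g` does not, so `g² = -det g`, a scalar; thus `g² = 1`
and `det g = -1`. Multiplying by such an element `t` shows that the centralizer of `s` in `Γ` has
determinant one. If `v` is an eigenvector of `s`, then in the basis `v, t v` the centralizer
consists of matrices `diag(a, a⁻¹)`, where `a` runs over a finite group of units without `-1`, and
`t` swaps the basis.
-/

section TwoByTwo

variable {K : Type*} [Field K] {M N : Matrix (Fin 2) (Fin 2) K}

theorem mul_self_eq_trace_smul_sub_det_smul_one {R : Type*} [CommRing R]
    (M : Matrix (Fin 2) (Fin 2) R) : M * M = M.trace • M - M.det • 1 := by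
  ext i j
  fin_cases i <;> fin_cases j <;>
    simp only [Fin.zero_eta, Fin.mk_one, mul_apply, Fin.sum_univ_two, trace_fin_two, det_fin_two,
      Matrix.sub_apply, Matrix.smul_apply, smul_eq_mul, one_apply_eq, one_apply_ne zero_ne_one,
      one_apply_ne one_ne_zero] <;>
    ring

theorem exists_eq_smul_one_add_smul_of_commute (hM : M ∉ Set.range (scalar (Fin 2)))
    (hNM : Commute N M) : ∃ a b : K, N = a • 1 + b • M := by
  have hentry : M 0 1 ≠ 0 ∨ M 1 0 ≠ 0 ∨ M 0 0 - M 1 1 ≠ 0 := by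
    by_contra! h
    refine hM ⟨M 0 0, ?_⟩
    ext i j
    fin_cases i <;> fin_cases j <;> simp [h.1, h.2.1, sub_eq_zero.mp h.2.2]
  suffices h : ∃ a b, N 0 0 = a + b * M 0 0 ∧ N 0 1 = b * M 0 1 ∧ N 1 0 = b * M 1 0 ∧
      N 1 1 = a + b * M 1 1 by
    obtain ⟨a, b, h00, h01, h10, h11⟩ := h
    refine ⟨a, b, ?_⟩
    ext i j
    fin_cases i <;> fin_cases j <;> simp [h00, h01, h10, h11]
  have hcomm := hNM.eq
  simp only [← Matrix.ext_iff, Fin.forall_fin_two, mul_apply, Fin.sum_univ_two] at hcomm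
  rcases hentry with h | h | h
  · exact ⟨N 0 0 - N 0 1 / M 0 1 * M 0 0, N 0 1 / M 0 1, by grind⟩
  · exact ⟨N 0 0 - N 1 0 / M 1 0 * M 0 0, N 1 0 / M 1 0, by grind⟩
  · exact ⟨N 0 0 - (N 0 0 - N 1 1) / (M 0 0 - M 1 1) * M 0 0,
      (N 0 0 - N 1 1) / (M 0 0 - M 1 1), by grind⟩

theorem commute_of_commute_of_notMem_range_scalar_s5 {N' : Matrix (Fin 2) (Fin 2) K}
    (hM : M ∉ Set.range (scalar (Fin 2))) (hN : Commute N M) (hN' : Commute N' M) :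
    Commute N N' := by
  obtain ⟨a, b, rfl⟩ := exists_eq_smul_one_add_smul_of_commute hM hN
  exact ((Commute.one_left N').smul_left a).add_left (hN'.symm.smul_left b)

theorem eq_or_eq_adjugate_of_commute [NeZero (2 : K)] (hM : M.discr ≠ 0) (hNM : Commute N M)
    (htrace : N.trace = M.trace) (hdet : N.det = M.det) : N = M ∨ N = M.adjugate := by
  have hM' : M ∉ Set.range (scalar (Fin 2)) := by
    rintro ⟨a, rfl⟩
    apply hM
    rw [discr_fin_two, trace_fin_two, det_fin_two, scalar_apply]
    simp only [diagonal_apply_eq, ne_eq, zero_ne_one, one_ne_zero, not_false_eq_true,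
      diagonal_apply_ne]
    ring
  obtain ⟨a, b, rfl⟩ := exists_eq_smul_one_add_smul_of_commute hM' hNM
  have hdiscr : (a • 1 + b • M).discr = b ^ 2 * M.discr := by
    simp only [discr_fin_two, trace_fin_two, det_fin_two, Matrix.add_apply, Matrix.smul_apply,
      smul_eq_mul, one_apply_eq, one_apply_ne zero_ne_one, one_apply_ne one_ne_zero]
    ring
  have hb : b ^ 2 = 1 := by
    rw [discr_fin_two, htrace, hdet, ← discr_fin_two] at hdiscr
    exact mul_right_cancel₀ hM (by rw [← hdiscr, one_mul])
  have ha : 2 * a = (1 - b) * M.trace := by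
    rw [trace_add, trace_smul, trace_smul, trace_one, Fintype.card_fin, smul_eq_mul,
      smul_eq_mul, Nat.cast_ofNat] at htrace
    linear_combination htrace
  rcases sq_eq_one_iff.mp hb with rfl | rfl
  · left
    have ha0 : a = 0 := by simpa [two_ne_zero] using ha
    simp [ha0]
  · right
    have ha1 : a = M.trace := mul_left_cancel₀ two_ne_zero (by linear_combination ha)
    ext i j
    fin_cases i <;> fin_cases j <;> simp [ha1, trace_fin_two, adjugate_fin_two]

theorem mul_self_eq_neg_det_smul_one_of_commute (hcomm : Commute (M * M) N)
    (hMN : ¬ Commute M N) : M * M = (-M.det) • 1 := by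
  have htrace : M.trace = 0 := by
    by_contra h
    refine hMN ((Commute.smul_left_iff₀ h).mp ?_)
    have hsmul : M.trace • M = M * M + M.det • 1 := by
      rw [mul_self_eq_trace_smul_sub_det_smul_one, sub_add_cancel]
    rw [hsmul]
    exact hcomm.add_left ((Commute.one_left N).smul_left _)
  rw [mul_self_eq_trace_smul_sub_det_smul_one, htrace, zero_smul, zero_sub, neg_smul]

theorem mem_range_scalar_of_mul_self_eq_one [NeZero (2 : K)] (hdet : M.det = 1)
    (hM : M * M = 1) : M ∈ Set.range (scalar (Fin 2)) := by
  have hsmul : M.trace • M = (2 : K) • 1 := by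
    have hcayley := mul_self_eq_trace_smul_sub_det_smul_one M
    rw [hM, hdet, one_smul, eq_sub_iff_add_eq] at hcayley
    rw [← hcayley, two_smul]
  have htrace : M.trace ≠ 0 := by
    intro h
    rw [h, zero_smul] at hsmul
    exact smul_ne_zero two_ne_zero one_ne_zero hsmul.symm
  refine ⟨M.trace⁻¹ * 2, ?_⟩
  rw [scalar_apply, ← smul_one_eq_diagonal, mul_smul, ← hsmul, inv_smul_smul₀ htrace]

end TwoByTwo

section Characters

open Module Representation

variable {G k V : Type*} [Group G] [Field k] [AddCommGroup V] [Module k V]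

theorem character_mul_character_inv_of_det_eq_one (ρ : Representation k G V)
    (hV : finrank k V = 2) {g : G} (hdet : LinearMap.det (ρ g) = 1) :
    ρ.character g * ρ.character g⁻¹ = ρ.character (g ^ 2) + 2 := by
  have : FiniteDimensional k V := .of_finrank_eq_succ hV
  let b := finBasisOfFinrankEq k V hV
  let A := LinearMap.toMatrix b b (ρ g)
  have hA : A.det = 1 := by rw [LinearMap.det_toMatrix, hdet]
  have hinv : LinearMap.toMatrix b b (ρ g⁻¹) = A.adjugate := by
    have hmul : A * LinearMap.toMatrix b b (ρ g⁻¹) = 1 := by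
      rw [← LinearMap.toMatrix_mul, ← map_mul, mul_inv_cancel, map_one, LinearMap.toMatrix_one]
    rw [← one_mul (LinearMap.toMatrix b b _), ← one_smul k 1, ← hA, ← adjugate_mul, mul_assoc,
      hmul, mul_one]
  have hsq : LinearMap.toMatrix b b (ρ (g ^ 2)) = A * A := by
    rw [pow_two, map_mul, LinearMap.toMatrix_mul]
  have htrace : A.adjugate.trace = A.trace := by
    simp [adjugate_fin_two, trace_fin_two, add_comm]
  simp only [character, LinearMap.trace_eq_matrix_trace k b, hinv, hsq, htrace,
    mul_self_eq_trace_smul_sub_det_smul_one A, hA]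
  simp [A]

theorem finrank_intertwiningMap_eq_finrank_invariants_add_two [CharZero k]
    (ρ : Representation k G V) (hG : Odd (Nat.card G)) (hV : finrank k V = 2)
    (hdet : ∀ g, LinearMap.det (ρ g) = 1) :
    finrank k (IntertwiningMap ρ ρ) = finrank k ρ.invariants + 2 := by
  have : FiniteDimensional k V := .of_finrank_eq_succ hV
  have : Finite G := Nat.finite_of_card_ne_zero hG.pos.ne'
  have := Fintype.ofFinite G
  have hcard : (Nat.card G : k) ≠ 0 := Nat.cast_ne_zero.mpr hG.pos.ne'
  let := invertibleOfNonzero hcard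
  have hsquare : ∑ g, ρ.character (g ^ 2) = ∑ g, ρ.character g :=
    (powCoprime hG.coprime_two_right).sum_comp ρ.character
  have hsum : ∑ g, ρ.character g * ρ.character g⁻¹ = ∑ g, ρ.character g + Nat.card G * 2 := by
    simp [character_mul_character_inv_of_det_eq_one ρ hV (hdet _), Finset.sum_add_distrib, hsquare]
  have h : (finrank k (IntertwiningMap ρ ρ) : k) = finrank k ρ.invariants + 2 := by
    rw [← card_inv_mul_sum_char_mul_char_eq_finrank, hsum, mul_add,
      card_inv_mul_sum_char_eq_finrank, inv_mul_cancel_left₀ hcard]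
  exact_mod_cast h

end Characters

open scoped MatrixGroups in
theorem isMulCommutative_of_odd_card_of_subgroup_SL2 {K : Type*} [Field K] [CharZero K]
    (S : Subgroup SL(2, K)) (hS : Odd (Nat.card S)) : IsMulCommutative S := by
  let ρ : Representation K S (Fin 2 → K) :=
    LinearEquiv.automorphismGroup.toLinearMapMonoidHom.comp
      (SpecialLinearGroup.toLin'.comp S.subtype)
  have hρ (g : S) : ρ g = toLin' (g : Matrix (Fin 2) (Fin 2) K) := rfl
  have hrank : ¬ Module.finrank K (ρ.IntertwiningMap ρ) ≤ 1 := by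
    have hdet (g : S) : LinearMap.det (ρ g) = 1 := by rw [hρ, LinearMap.det_toLin', g.1.det_coe]
    rw [finrank_intertwiningMap_eq_finrank_invariants_add_two ρ hS (by simp) hdet]
    lia
  rw [finrank_le_one_iff] at hrank
  push Not at hrank
  obtain ⟨f, hf⟩ := hrank 1
  have hscalar : LinearMap.toMatrix' f.toLinearMap ∉ Set.range (scalar (Fin 2)) := by
    rintro ⟨c, hc⟩
    apply hf c
    ext : 1
    apply LinearMap.toMatrix'.injective
    have hone : (1 : ρ.IntertwiningMap ρ).toLinearMap = LinearMap.id := rfl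
    simp [← hc, hone, smul_one_eq_diagonal]
  have hcomm (g : S) :
      Commute (g : Matrix (Fin 2) (Fin 2) K) (LinearMap.toMatrix' f.toLinearMap) := by
    have := congrArg LinearMap.toMatrix' (f.isIntertwining' g)
    simpa [hρ, LinearMap.toMatrix'_comp] using! this.symm
  refine ⟨⟨fun g h ↦ Subtype.ext (Subtype.ext ?_)⟩⟩
  exact commute_of_commute_of_notMem_range_scalar_s5 hscalar (hcomm g) (hcomm h)

theorem finite_comap_of_injective {G G' : Type*} [Group G] [Group G'] {f : G →* G'}
    (hf : Function.Injective f) (Γ : Subgroup G') [Finite Γ] : Finite (Γ.comap f) :=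
  Finite.of_injective (f.subgroupComap Γ) fun _ _ h ↦ Subtype.ext (hf (congrArg Subtype.val h))

theorem isOfFinOrder_of_mem_finite_subgroup {G : Type*} [Group G] {Γ : Subgroup G} [Finite Γ]
    {g : G} (hg : g ∈ Γ) : IsOfFinOrder g :=
  Submonoid.isOfFinOrder_coe.mpr (isOfFinOrder_of_finite (⟨g, hg⟩ : Γ))

open scoped commutatorElement in
theorem exists_mem_map_eq_one_ne_one {G A : Type*} [Group G] [CommGroup A] (f : G →* A)
    {Γ : Subgroup G} (hΓ : ¬ IsMulCommutative Γ) : ∃ g ∈ Γ, f g = 1 ∧ g ≠ 1 := by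
  obtain ⟨g, h, hgh⟩ : ∃ g h : Γ, ⁅(g : G), (h : G)⁆ ≠ 1 := by
    contrapose! hΓ
    exact ⟨⟨fun g h ↦ Subtype.ext (commutatorElement_eq_one_iff_mul_comm.mp (hΓ g h))⟩⟩
  refine ⟨⁅(g : G), (h : G)⁆, ⁅g, h⁆.2, ?_, hgh⟩
  rw [map_commutatorElement, commutatorElement_eq_one_iff_mul_comm, mul_comm]

theorem disjoint_center_of_forall_eq_smul_one {n R : Type*} [Fintype n] [DecidableEq n]
    [CommRing R] {Γ : Subgroup (GL n R)}
    (hΓ : ∀ A ∈ Γ, ∀ a : R, A.val = a • (1 : Matrix n n R) → a = 1) :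
    Disjoint Γ (Subgroup.center (GL n R)) := by
  refine Subgroup.disjoint_def.mpr fun {A} hA hcenter ↦ Units.ext ?_
  obtain ⟨a, ha⟩ := GeneralLinearGroup.mem_center_iff_val_mem_range_scalar.mp hcenter
  rw [scalar_apply, ← smul_one_eq_diagonal] at ha
  rw [← ha, hΓ A hA a ha.symm, one_smul, Units.val_one]

section FiniteSubgroups

open Subgroup
open scoped MatrixGroups

variable {K : Type*} [Field K] {Γ : Subgroup (GL (Fin 2) K)}

theorem odd_card_comap_toGL [NeZero (2 : K)] [Finite Γ] (hΓ : Disjoint Γ (center (GL (Fin 2) K))) :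
    Odd (Nat.card (Γ.comap SpecialLinearGroup.toGL)) := by
  have hfin : Finite (Γ.comap (SpecialLinearGroup.toGL (n := Fin 2) (R := K))) :=
    finite_comap_of_injective SpecialLinearGroup.toGL_injective Γ
  rw [← Nat.not_even_iff_odd]
  intro heven
  obtain ⟨x, hx⟩ := exists_prime_orderOf_dvd_card' 2 heven.two_dvd
  have hx2 : x.1.1 * x.1.1 = 1 := by
    have := pow_orderOf_eq_one x
    rw [hx, pow_two] at this
    exact congrArg (fun y ↦ y.1.1) this
  have hcenter : x.1.toGL ∈ center (GL (Fin 2) K) :=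
    GeneralLinearGroup.mem_center_iff_val_mem_range_scalar.mpr
      (mem_range_scalar_of_mul_self_eq_one x.1.det_coe hx2)
  have hone : x.1.toGL = 1 := disjoint_def.mp hΓ x.2 hcenter
  have hx1 : x = 1 := Subtype.ext (SpecialLinearGroup.toGL_injective (by simpa using hone))
  simp [hx1] at hx

theorem commute_of_det_eq_one [CharZero K] [Finite Γ] (hΓ : Disjoint Γ (center (GL (Fin 2) K)))
    {g h : GL (Fin 2) K} (hg : g ∈ Γ) (hh : h ∈ Γ) (hgdet : g.det = 1) (hhdet : h.det = 1) :
    Commute g h := by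
  have hcomm := isMulCommutative_of_odd_card_of_subgroup_SL2 _ (odd_card_comap_toGL hΓ)
  let g' : SL(2, K) := ⟨g, congrArg Units.val hgdet⟩
  let h' : SL(2, K) := ⟨h, congrArg Units.val hhdet⟩
  have hg' : g'.toGL = g := Units.ext rfl
  have hh' : h'.toGL = h := Units.ext rfl
  have hgh' : g' * h' = h' * g' := congrArg Subtype.val
    (hcomm.is_comm.comm ⟨g', by rwa [mem_comap, hg']⟩ ⟨h', by rwa [mem_comap, hh']⟩)
  rw [← hg', ← hh']
  exact Commute.map hgh' SpecialLinearGroup.toGL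

theorem discr_ne_zero_of_isOfFinOrder [CharZero K] {g : GL (Fin 2) K} (hg : IsOfFinOrder g)
    (hcenter : g ∉ center (GL (Fin 2) K)) : g.val.discr ≠ 0 := by
  intro hdiscr
  have hparabolic : g.IsParabolic :=
    ⟨mt GeneralLinearGroup.mem_center_iff_val_mem_range_scalar.mpr hcenter, hdiscr⟩
  have hone := hparabolic.pow hg.orderOf_pos.ne'
  rw [pow_orderOf_eq_one] at hone
  exact hone.1 ⟨1, by simp⟩

theorem exists_mem_not_commute {s : GL (Fin 2) K} (hs : s ∉ center (GL (Fin 2) K))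
    (hΓ : ¬ IsMulCommutative Γ) : ∃ t ∈ Γ, ¬ Commute t s := by
  contrapose! hΓ
  refine ⟨⟨fun g h ↦ Subtype.ext (Units.ext ?_)⟩⟩
  exact commute_of_commute_of_notMem_range_scalar_s5
    (mt GeneralLinearGroup.mem_center_iff_val_mem_range_scalar.mpr hs)
    (hΓ g g.2).units_val (hΓ h h.2).units_val

variable [CharZero K] [Finite Γ] {s g t : GL (Fin 2) K}

theorem conj_eq_self_or_eq_inv (hΓ : Disjoint Γ (center (GL (Fin 2) K))) (hs : s ∈ Γ)
    (hsdet : s.det = 1) (hs1 : s ≠ 1) (hg : g ∈ Γ) : g * s * g⁻¹ = s ∨ g * s * g⁻¹ = s⁻¹ := by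
  have hconjdet : (g * s * g⁻¹).det = 1 := by simp [hsdet]
  have hcomm : Commute (g * s * g⁻¹) s :=
    commute_of_det_eq_one hΓ (Γ.mul_mem (Γ.mul_mem hg hs) (Γ.inv_mem hg)) hs hconjdet hsdet
  have hdiscr : s.val.discr ≠ 0 :=
    discr_ne_zero_of_isOfFinOrder (isOfFinOrder_of_mem_finite_subgroup hs)
      fun hc ↦ hs1 (disjoint_def.mp hΓ hs hc)
  have hinv : (s⁻¹).val = s.val.adjugate := by
    simp [inv_def, ← GeneralLinearGroup.val_det_apply, hsdet]
  refine (eq_or_eq_adjugate_of_commute hdiscr hcomm.units_val ?_ ?_).imp Units.ext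
    fun h ↦ Units.ext (h.trans hinv.symm)
  · exact trace_units_conj g s.val
  · exact det_units_conj g s.val

theorem conj_eq_inv_of_not_commute (hΓ : Disjoint Γ (center (GL (Fin 2) K))) (hs : s ∈ Γ)
    (hsdet : s.det = 1) (hg : g ∈ Γ) (hgs : ¬ Commute g s) : g * s * g⁻¹ = s⁻¹ := by
  have hs1 : s ≠ 1 := by
    rintro rfl
    exact hgs (Commute.one_right g)
  exact (conj_eq_self_or_eq_inv hΓ hs hsdet hs1 hg).resolve_left
    fun h ↦ hgs (mul_inv_eq_iff_eq_mul.mp h)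

theorem commute_mul_of_not_commute (hΓ : Disjoint Γ (center (GL (Fin 2) K))) (hs : s ∈ Γ)
    (hsdet : s.det = 1) (hg : g ∈ Γ) (hgs : ¬ Commute g s) (ht : t ∈ Γ) (hts : ¬ Commute t s) :
    Commute (t * g) s := by
  rw [commute_iff_eq, ← mul_inv_eq_iff_eq_mul]
  calc t * g * s * (t * g)⁻¹ = t * (g * s * g⁻¹) * t⁻¹ := by group
    _ = (t * s * t⁻¹)⁻¹ := by rw [conj_eq_inv_of_not_commute hΓ hs hsdet hg hgs, conj_inv]
    _ = s := by rw [conj_eq_inv_of_not_commute hΓ hs hsdet ht hts, inv_inv]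

theorem mul_self_eq_one_and_det_eq_neg_one_of_not_commute
    (hΓ : Disjoint Γ (center (GL (Fin 2) K))) (hs : s ∈ Γ) (hsdet : s.det = 1) (hg : g ∈ Γ)
    (hgs : ¬ Commute g s) : g * g = 1 ∧ g.det = -1 := by
  have hcomm : Commute (g * g) s := commute_mul_of_not_commute hΓ hs hsdet hg hgs hg hgs
  have hsq : (g * g).val = (-g.val.det) • 1 :=
    mul_self_eq_neg_det_smul_one_of_commute hcomm.units_val fun h ↦ hgs (Units.ext h)
  have hone : g * g = 1 := disjoint_def.mp hΓ (Γ.mul_mem hg hg)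
    (GeneralLinearGroup.mem_center_iff_val_mem_range_scalar.mpr ⟨-g.val.det, by
      rw [hsq, scalar_apply, smul_one_eq_diagonal]⟩)
  refine ⟨hone, Units.ext ?_⟩
  rw [hone] at hsq
  have hneg : 1 = -g.val.det := by simpa using congr($hsq 0 0)
  rw [GeneralLinearGroup.val_det_apply, Units.val_neg, Units.val_one, hneg, neg_neg]

theorem det_eq_one_of_commute (hΓ : Disjoint Γ (center (GL (Fin 2) K))) (hs : s ∈ Γ)
    (hsdet : s.det = 1) (ht : t ∈ Γ) (hts : ¬ Commute t s) (hg : g ∈ Γ) (hgs : Commute g s) :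
    g.det = 1 := by
  have htg : ¬ Commute (t * g) s := fun h ↦ hts (by simpa using h.mul_left hgs.inv_left)
  have htdet := (mul_self_eq_one_and_det_eq_neg_one_of_not_commute hΓ hs hsdet ht hts).2
  have htgdet :=
    (mul_self_eq_one_and_det_eq_neg_one_of_not_commute hΓ hs hsdet (Γ.mul_mem ht hg) htg).2
  rw [map_mul, htdet] at htgdet
  simpa using htgdet

end FiniteSubgroups

section Dihedral

variable {R : Type*} [CommRing R]

/-- The maximal torus `a ↦ diag(a, a⁻¹)` of `SL₂`, as a homomorphism into `GL₂`; the rotations of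
the dihedral groups below are its values. -/
def diagInv : Rˣ →* GL (Fin 2) R where
  toFun a :=
    ⟨!![(a : R), 0; 0, ↑a⁻¹], !![↑a⁻¹, 0; 0, a], by simp [one_fin_two], by simp [one_fin_two]⟩
  map_one' := Units.ext (by simp [one_fin_two])
  map_mul' a b := Units.ext (by simp [mul_comm])

theorem val_diagInv (a : Rˣ) : (diagInv a).val = !![(a : R), 0; 0, ↑a⁻¹] := rfl

theorem diagInv_injective : Function.Injective (diagInv (R := R)) := fun a b h ↦
  Units.ext (by simpa [val_diagInv] using congr($(congrArg Units.val h) 0 0))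

theorem val_swap_fin_two : (GeneralLinearGroup.swap R (0 : Fin 2) 1).val = !![0, 1; 1, 0] := by
  ext i j
  fin_cases i <;> fin_cases j <;> simp [Matrix.swap, PEquiv.toMatrix_apply]

theorem swap_mul_swap_fin_two :
    GeneralLinearGroup.swap R (0 : Fin 2) 1 * GeneralLinearGroup.swap R 0 1 = 1 :=
  Units.ext (Matrix.swap_mul_self 0 1)

theorem val_swap_mul_diagInv (a : Rˣ) :
    (GeneralLinearGroup.swap R 0 1 * diagInv a).val = !![0, ↑a⁻¹; (a : R), 0] := by
  rw [Units.val_mul, val_swap_fin_two, val_diagInv]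
  simp

theorem diagInv_mul_swap (a : Rˣ) :
    diagInv a * GeneralLinearGroup.swap R 0 1 = GeneralLinearGroup.swap R 0 1 * diagInv a⁻¹ := by
  apply Units.ext
  rw [val_swap_mul_diagInv, Units.val_mul, val_swap_fin_two, val_diagInv]
  simp

theorem swap_mul_diagInv_mul_swap (a : Rˣ) :
    GeneralLinearGroup.swap R 0 1 * diagInv a * GeneralLinearGroup.swap R 0 1 = diagInv a⁻¹ := by
  rw [mul_assoc, diagInv_mul_swap, ← mul_assoc, swap_mul_swap_fin_two, one_mul]

/-- The dihedral-type subgroup of `GL₂` consisting of the matrices `diag(a, a⁻¹)` and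
`swap * diag(a, a⁻¹) = !![0, a⁻¹; a, 0]` for `a ∈ H`. The group `Γₙ` is the case where `H` is the
group of `(2n+1)`-th roots of unity. -/
def dihedralGL (H : Subgroup Rˣ) : Subgroup (GL (Fin 2) R) where
  carrier := {g | ∃ a ∈ H, g = diagInv a ∨ g = GeneralLinearGroup.swap R 0 1 * diagInv a}
  one_mem' := ⟨1, H.one_mem, .inl (map_one _).symm⟩
  mul_mem' := by
    rintro _ _ ⟨a, ha, rfl | rfl⟩ ⟨b, hb, rfl | rfl⟩
    · exact ⟨a * b, H.mul_mem ha hb, .inl (map_mul _ a b).symm⟩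
    · refine ⟨a⁻¹ * b, H.mul_mem (H.inv_mem ha) hb, .inr ?_⟩
      rw [← mul_assoc, diagInv_mul_swap, mul_assoc, map_mul]
    · refine ⟨a * b, H.mul_mem ha hb, .inr ?_⟩
      rw [mul_assoc, map_mul]
    · refine ⟨a⁻¹ * b, H.mul_mem (H.inv_mem ha) hb, .inl ?_⟩
      rw [← mul_assoc, swap_mul_diagInv_mul_swap, map_mul]
  inv_mem' := by
    rintro _ ⟨a, ha, rfl | rfl⟩
    · exact ⟨a⁻¹, H.inv_mem ha, .inl (map_inv _ a).symm⟩
    · refine ⟨a, ha, .inr (inv_eq_of_mul_eq_one_right ?_)⟩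
      rw [← mul_assoc, swap_mul_diagInv_mul_swap, ← map_mul, inv_mul_cancel, map_one]

theorem mem_dihedralGL {H : Subgroup Rˣ} {g : GL (Fin 2) R} :
    g ∈ dihedralGL H ↔
      ∃ a ∈ H, g = diagInv a ∨ g = GeneralLinearGroup.swap R 0 1 * diagInv a :=
  Iff.rfl

theorem eq_dihedralGL_comap_diagInv {Δ : Subgroup (GL (Fin 2) R)}
    (hswap : GeneralLinearGroup.swap R 0 1 ∈ Δ)
    (hΔ : ∀ g ∈ Δ, g ∈ diagInv.range ∨ GeneralLinearGroup.swap R 0 1 * g ∈ diagInv.range) :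
    Δ = dihedralGL (Δ.comap diagInv) := by
  ext g
  rw [mem_dihedralGL]
  constructor
  · intro hg
    rcases hΔ g hg with ⟨a, rfl⟩ | ⟨a, ha⟩
    · exact ⟨a, hg, .inl rfl⟩
    · refine ⟨a, Subgroup.mem_comap.mpr (ha ▸ Δ.mul_mem hswap hg), .inr ?_⟩
      rw [ha, ← mul_assoc, swap_mul_swap_fin_two, one_mul]
  · rintro ⟨a, ha, rfl | rfl⟩
    · exact ha
    · exact Δ.mul_mem hswap ha

theorem mem_dihedralGL_rootsOfUnity_iff {K : Type*} [Field K] {N : ℕ} [NeZero N] {ρ : K}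
    (hρ : IsPrimitiveRoot ρ N) {g : GL (Fin 2) K} :
    g ∈ dihedralGL (rootsOfUnity N K) ↔ ∃ k < N,
      g.val = !![ρ ^ k, 0; 0, ρ⁻¹ ^ k] ∨ g.val = !![0, ρ⁻¹ ^ k; ρ ^ k, 0] := by
  rw [mem_dihedralGL]
  constructor
  · rintro ⟨a, ha, hg⟩
    obtain ⟨k, hk, hka⟩ := hρ.eq_pow_of_pow_eq_one ((mem_rootsOfUnity' N a).mp ha)
    refine ⟨k, hk, hg.imp ?_ ?_⟩ <;> rintro rfl
    · rw [val_diagInv, Units.val_inv_eq_inv_val, inv_pow, hka]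
    · rw [val_swap_mul_diagInv, Units.val_inv_eq_inv_val, inv_pow, hka]
  · rintro ⟨k, -, hg⟩
    let a : Kˣ := Units.mk0 ρ (hρ.ne_zero (NeZero.ne N)) ^ k
    have ha : (a : K) = ρ ^ k := by simp [a]
    refine ⟨a, ?_, hg.imp (fun h ↦ Units.ext ?_) (fun h ↦ Units.ext ?_)⟩
    · rw [mem_rootsOfUnity', ha, pow_right_comm, hρ.pow_eq_one, one_pow]
    · rw [h, val_diagInv, Units.val_inv_eq_inv_val, inv_pow, ha]
    · rw [h, val_swap_mul_diagInv, Units.val_inv_eq_inv_val, inv_pow, ha]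

theorem eq_rootsOfUnity_card [IsDomain R] (H : Subgroup Rˣ) [Finite H] :
    H = rootsOfUnity (Nat.card H) R := by
  have : NeZero (Nat.card H) := ⟨Nat.card_pos.ne'⟩
  refine Subgroup.eq_of_le_of_card_ge (fun a ha ↦ ?_) (card_rootsOfUnity R _)
  exact congrArg Subtype.val (pow_card_eq_one' (x := (⟨a, ha⟩ : H)))

theorem exists_comap_diagInv_eq_rootsOfUnity [IsDomain R] [NeZero (2 : R)]
    {Δ : Subgroup (GL (Fin 2) R)} [Finite Δ]
    (hΔ : Disjoint Δ (Subgroup.center (GL (Fin 2) R))) :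
    ∃ n, Δ.comap diagInv = rootsOfUnity (2 * n + 1) R := by
  have hfin : Finite (Δ.comap diagInv) := finite_comap_of_injective diagInv_injective Δ
  have heq := eq_rootsOfUnity_card (Δ.comap diagInv)
  suffices hodd : Odd (Nat.card (Δ.comap diagInv)) by
    obtain ⟨n, hn⟩ := hodd
    exact ⟨n, hn ▸ heq⟩
  rw [← Nat.not_even_iff_odd]
  intro heven
  have hmem : (-1 : Rˣ) ∈ Δ.comap diagInv := by
    rw [heq, mem_rootsOfUnity, heven.neg_one_pow]
  have hcenter : diagInv (-1 : Rˣ) ∈ Subgroup.center (GL (Fin 2) R) := by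
    refine GeneralLinearGroup.mem_center_iff_val_mem_range_scalar.mpr ⟨-1, ?_⟩
    ext i j
    fin_cases i <;> fin_cases j <;> simp [val_diagInv]
  have hone : (-1 : Rˣ) = 1 :=
    diagInv_injective ((Subgroup.disjoint_def.mp hΔ hmem hcenter).trans (map_one _).symm)
  have h2 : (-1 : R) = 1 := by simpa using congrArg Units.val hone
  exact two_ne_zero (α := R) (by linear_combination -h2)

theorem mem_range_diagInv_of_commute {K : Type*} [Field K] {a : Kˣ} {g : GL (Fin 2) K}
    (ha : diagInv a ∉ Subgroup.center (GL (Fin 2) K)) (hg : Commute g (diagInv a))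
    (hdet : g.det = 1) : g ∈ (diagInv (R := K)).range := by
  obtain ⟨c, d, hcd⟩ := exists_eq_smul_one_add_smul_of_commute
    (mt GeneralLinearGroup.mem_center_iff_val_mem_range_scalar.mpr ha) hg.units_val
  have h01 : g.val 0 1 = 0 := by simp [hcd, val_diagInv]
  have h10 : g.val 1 0 = 0 := by simp [hcd, val_diagInv]
  have hmul : g.val 0 0 * g.val 1 1 = 1 := by
    have := congrArg Units.val hdet
    simpa [det_fin_two, h01] using this
  refine ⟨⟨g.val 0 0, g.val 1 1, hmul, by rw [mul_comm, hmul]⟩, Units.ext ?_⟩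
  conv_rhs => rw [eta_fin_two g.val, h01, h10]
  rfl

end Dihedral

section Diagonalization

open Module.End

variable {K : Type*} [Field K] {μ : K} {v : Fin 2 → K} {s t : GL (Fin 2) K}

theorem mul_self_ne_one_of_hasEigenvalue {M : Matrix (Fin 2) (Fin 2) K} (hdet : M.det = 1)
    (hdiscr : M.discr ≠ 0) (hμ : HasEigenvalue (toLin' M) μ) : μ * μ ≠ 1 := by
  intro hμμ
  have hroot : μ ^ 2 - M.trace * μ + 1 = 0 := by
    simpa [hasEigenvalue_iff_isRoot_charpoly, charpoly_fin_two, hdet] using hμ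
  have htrace : M.trace * μ = 2 := by linear_combination hμμ - hroot
  apply hdiscr
  rw [discr_fin_two, hdet]
  linear_combination (M.trace * μ + 2) * htrace - M.trace ^ 2 * hμμ

theorem ne_zero_of_hasEigenvector (hv : HasEigenvector (toLin' s.val) μ v) : μ ≠ 0 := by
  rintro rfl
  have hsv : s.val *ᵥ v = 0 := by simpa using hv.apply_eq_smul
  exact hv.2 (mulVec_injective_of_isUnit s.isUnit (by rw [hsv, mulVec_zero]))

theorem hasEigenvector_mulVec_of_conj_eq_inv (hts : t * s * t⁻¹ = s⁻¹)
    (hv : HasEigenvector (toLin' s.val) μ v) :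
    HasEigenvector (toLin' s.val) μ⁻¹ (t.val *ᵥ v) := by
  have hsv : s.val *ᵥ v = μ • v := hv.apply_eq_smul
  have hsts : s.val * t.val * s.val = t.val :=
    congrArg Units.val (show s * t * s = t by rw [mul_assoc, mul_inv_eq_iff_eq_mul.mp hts]; group)
  refine hasEigenvector_iff.mpr ⟨mem_eigenspace_iff.mpr ?_, fun h ↦ hv.2 ?_⟩
  · rw [toLin'_apply, eq_inv_smul_iff₀ (ne_zero_of_hasEigenvector hv), ← mulVec_smul,
      ← mulVec_smul, ← hsv, mulVec_mulVec, mulVec_mulVec, hsts]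
  · exact mulVec_injective_of_isUnit t.isUnit (by rw [h, mulVec_zero])

theorem exists_conj_eq_of_linearIndependent {w : Fin 2 → K} {a : Kˣ}
    (hvw : LinearIndependent K ![v, w]) (hsv : s.val *ᵥ v = (a : K) • v)
    (hsw : s.val *ᵥ w = (↑a⁻¹ : K) • w) (htv : t.val *ᵥ v = w) (htw : t.val *ᵥ w = v) :
    ∃ U : GL (Fin 2) K, U⁻¹ * s * U = diagInv a ∧ U⁻¹ * t * U = GeneralLinearGroup.swap K 0 1 := by
  obtain ⟨U, hU⟩ : IsUnit (of ![v, w])ᵀ := linearIndependent_cols_iff_isUnit.mp hvw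
  have hmul (g : GL (Fin 2) K) : (g * U).val = (of ![g.val *ᵥ v, g.val *ᵥ w])ᵀ := by
    rw [Units.val_mul, hU]
    ext i j
    fin_cases j <;> rfl
  refine ⟨U, ?_, ?_⟩ <;> rw [mul_assoc, inv_mul_eq_iff_eq_mul] <;>
    apply Units.ext <;> rw [hmul, Units.val_mul, hU]
  · rw [hsv, hsw, val_diagInv]
    ext i j
    fin_cases j <;> simp [Matrix.mul_apply, mul_comm]
  · rw [htv, htw, val_swap_fin_two]
    ext i j
    fin_cases j <;> simp [Matrix.mul_apply]

theorem exists_conj_eq_diagInv_and_conj_eq_swap [IsAlgClosed K]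
    (hsdet : s.det = 1) (hdiscr : s.val.discr ≠ 0) (hts : t * s * t⁻¹ = s⁻¹) (ht : t * t = 1) :
    ∃ (U : GL (Fin 2) K) (a : Kˣ), U⁻¹ * s * U = diagInv a ∧
      U⁻¹ * t * U = GeneralLinearGroup.swap K 0 1 := by
  obtain ⟨μ, hμ⟩ := exists_eigenvalue (toLin' s.val)
  obtain ⟨v, hv⟩ := hμ.exists_hasEigenvector
  have hw := hasEigenvector_mulVec_of_conj_eq_inv hts hv
  have hμ0 := ne_zero_of_hasEigenvector hv
  have hμμ := mul_self_ne_one_of_hasEigenvalue (congrArg Units.val hsdet) hdiscr hμ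
  have hindep : LinearIndependent K ![v, t.val *ᵥ v] := by
    refine eigenvectors_linearIndependent' (toLin' s.val) ![μ, μ⁻¹] ?_ _ ?_
    · exact injective_pair_iff_ne.mpr fun h ↦ hμμ ((mul_eq_one_iff_eq_inv₀ hμ0).mpr h)
    · exact Fin.forall_fin_two.mpr ⟨hv, hw⟩
  have htt : t.val *ᵥ t.val *ᵥ v = v := by
    rw [mulVec_mulVec, ← Units.val_mul, ht, Units.val_one, one_mulVec]
  obtain ⟨U, hU⟩ := exists_conj_eq_of_linearIndependent (a := Units.mk0 μ hμ0) hindep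
    hv.apply_eq_smul hw.apply_eq_smul rfl htt
  exact ⟨U, _, hU⟩

end Diagonalization

section Conjugation

open scoped Pointwise

variable {K : Type*} [Field K] [CharZero K]

theorem disjoint_conj_smul_center {G : Type*} [Group G] {Γ : Subgroup G}
    (hΓ : Disjoint Γ (Subgroup.center G)) (g : G) :
    Disjoint (MulAut.conj g • Γ) (Subgroup.center G) := by
  rw [disjoint_iff, ← Subgroup.Normal.conj_smul_eq_self g (Subgroup.center G), ← Subgroup.smul_inf,
    hΓ.eq_bot, Subgroup.smul_bot]

theorem eq_dihedralGL_of_not_commute {Δ : Subgroup (GL (Fin 2) K)} [Finite Δ]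
    (hΔ : Disjoint Δ (Subgroup.center (GL (Fin 2) K))) {a : Kˣ} (ha : diagInv a ∈ Δ)
    (hswap : GeneralLinearGroup.swap K 0 1 ∈ Δ)
    (hcomm : ¬ Commute (GeneralLinearGroup.swap K 0 1) (diagInv a)) :
    Δ = dihedralGL (Δ.comap diagInv) := by
  have hadet : (diagInv a).det = 1 := Units.ext (by simp [val_diagInv])
  have hcenter : diagInv a ∉ Subgroup.center (GL (Fin 2) K) :=
    fun h ↦ hcomm (Subgroup.mem_center_iff.mp h _)
  have hrange (g) (hg : g ∈ Δ) (hga : Commute g (diagInv a)) : g ∈ diagInv.range :=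
    mem_range_diagInv_of_commute hcenter hga (det_eq_one_of_commute hΔ ha hadet hswap hcomm hg hga)
  refine eq_dihedralGL_comap_diagInv hswap fun g hg ↦ ?_
  by_cases hga : Commute g (diagInv a)
  · exact .inl (hrange g hg hga)
  · exact .inr (hrange _ (Δ.mul_mem hswap hg)
      (commute_mul_of_not_commute hΔ ha hadet hg hga hswap hcomm))

theorem exists_eq_dihedralGL_rootsOfUnity {Δ : Subgroup (GL (Fin 2) K)} [Finite Δ]
    (hΔ : Disjoint Δ (Subgroup.center (GL (Fin 2) K))) {a : Kˣ} (ha : diagInv a ∈ Δ)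
    (hswap : GeneralLinearGroup.swap K 0 1 ∈ Δ)
    (hcomm : ¬ Commute (GeneralLinearGroup.swap K 0 1) (diagInv a)) :
    ∃ n, 1 ≤ n ∧ Δ = dihedralGL (rootsOfUnity (2 * n + 1) K) := by
  obtain ⟨n, hn⟩ := exists_comap_diagInv_eq_rootsOfUnity hΔ
  refine ⟨n, ?_, hn ▸ eq_dihedralGL_of_not_commute hΔ ha hswap hcomm⟩
  rw [Nat.one_le_iff_ne_zero]
  rintro rfl
  have ha1 : a = 1 := by simpa [hn] using Subgroup.mem_comap.mpr ha
  exact hcomm (by rw [ha1, map_one]; exact Commute.one_right _)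

theorem nonabelian_finite_subgroup_GL2_no_scalar_conj_dihedral_general [IsAlgClosed K]
    (Γ : Subgroup (GL (Fin 2) K)) [Finite Γ] (hnab : ¬ IsMulCommutative Γ)
    (hΓ : Disjoint Γ (Subgroup.center (GL (Fin 2) K))) :
    ∃ n, 1 ≤ n ∧ ∃ U : GL (Fin 2) K,
      MulAut.conj U⁻¹ • Γ = dihedralGL (rootsOfUnity (2 * n + 1) K) := by
  obtain ⟨s, hs, hsdet, hs1⟩ := exists_mem_map_eq_one_ne_one GeneralLinearGroup.det hnab
  have hcenter : s ∉ Subgroup.center (GL (Fin 2) K) :=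
    fun h ↦ hs1 (Subgroup.disjoint_def.mp hΓ hs h)
  obtain ⟨t, ht, hts⟩ := exists_mem_not_commute hcenter hnab
  obtain ⟨htt, -⟩ := mul_self_eq_one_and_det_eq_neg_one_of_not_commute hΓ hs hsdet ht hts
  obtain ⟨U, a, hsU, htU⟩ := exists_conj_eq_diagInv_and_conj_eq_swap hsdet
    (discr_ne_zero_of_isOfFinOrder (isOfFinOrder_of_mem_finite_subgroup hs) hcenter)
    (conj_eq_inv_of_not_commute hΓ hs hsdet ht hts) htt
  have hmem {g} (hg : g ∈ Γ) : U⁻¹ * g * U ∈ MulAut.conj U⁻¹ • Γ := ⟨g, hg, by simp⟩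
  have hcomm : ¬ Commute (GeneralLinearGroup.swap K 0 1) (diagInv a) := by
    rw [← hsU, ← htU]
    simpa using mt (Commute.conj_iff U⁻¹).mp hts
  have hfin : Finite ↥(MulAut.conj U⁻¹ • Γ) := .of_equiv _ (Subgroup.equivSMul _ Γ).toEquiv
  obtain ⟨n, hn, heq⟩ := exists_eq_dihedralGL_rootsOfUnity (disjoint_conj_smul_center hΓ U⁻¹)
    (hsU ▸ hmem hs) (htU ▸ hmem ht) hcomm
  exact ⟨n, hn, U, heq⟩

end Conjugation

/-- Let `Γ` be a nonabelian finite subgroup of `GL(2,ℂ)` which contains no scalar matrix `aI`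
with `a ≠ 1`. Then there exist `n ≥ 1` and `U ∈ GL(2,ℂ)` such that `U⁻¹ Γ U = Γₙ`, where,
with `ρ = exp(2πi/(2n+1))`, `Γₙ` consists of the diagonal matrices `[[ρᵏ,0],[0,ρ⁻ᵏ]]` and the
antidiagonal matrices `[[0,ρ⁻ᵏ],[ρᵏ,0]]` for `0 ≤ k ≤ 2n`. -/
theorem nonabelian_finite_subgroup_GL2_no_scalar_conj_dihedral
    (Γ : Subgroup (GL (Fin 2) ℂ)) [Finite Γ]
    (hnab : ¬ ∀ a ∈ Γ, ∀ b ∈ Γ, a * b = b * a)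
    (hsc : ∀ A ∈ Γ, ∀ a : ℂ, (A : Matrix (Fin 2) (Fin 2) ℂ) = a • (1 : Matrix (Fin 2) (Fin 2) ℂ)
      → a = 1) :
    ∃ n : ℕ, 1 ≤ n ∧ ∃ U : GL (Fin 2) ℂ, ∀ B : GL (Fin 2) ℂ,
      ((∃ A ∈ Γ, U⁻¹ * A * U = B) ↔
        (∃ k : ℕ, k ≤ 2 * n ∧
          ((B : Matrix (Fin 2) (Fin 2) ℂ) =
              !![(Complex.exp (2 * Real.pi * Complex.I / (2 * n + 1))) ^ k, 0;
                 0, (Complex.exp (2 * Real.pi * Complex.I / (2 * n + 1)))⁻¹ ^ k] ∨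
           (B : Matrix (Fin 2) (Fin 2) ℂ) =
              !![0, (Complex.exp (2 * Real.pi * Complex.I / (2 * n + 1)))⁻¹ ^ k;
                 (Complex.exp (2 * Real.pi * Complex.I / (2 * n + 1))) ^ k, 0]))) := by
  have hcomm : ¬ IsMulCommutative Γ := fun h ↦ hnab fun a ha b hb ↦
    congrArg Subtype.val (h.is_comm.comm ⟨a, ha⟩ ⟨b, hb⟩)
  obtain ⟨n, hn, U, hU⟩ := nonabelian_finite_subgroup_GL2_no_scalar_conj_dihedral_general Γ hcomm
    (disjoint_center_of_forall_eq_smul_one hsc)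
  have hρ : IsPrimitiveRoot (Complex.exp (2 * Real.pi * Complex.I / (2 * n + 1))) (2 * n + 1) := by
    exact_mod_cast Complex.isPrimitiveRoot_exp (2 * n + 1) (Nat.succ_ne_zero _)
  refine ⟨n, hn, U, fun B ↦ ?_⟩
  simp_rw [← Nat.lt_succ_iff]
  rw [← mem_dihedralGL_rootsOfUnity_iff hρ, ← hU]
  simp [Subgroup.mem_smul_pointwise_iff_exists]
end

section
/- Suppose q is a primitive n-th root of unity with n ≥ 2. Then the n-th power of the q-difference operator annihilates every polynomial: Dⁿf = 0 for all f ∈ ℂ[z]. -/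
noncomputable section

/-- The scaling operator `σ` on `ℂ[z]`: `(σ f)(z) = f (q z)`. -/
def qscale (q : ℂ) (f : Polynomial ℂ) : Polynomial ℂ :=
  f.comp (Polynomial.C q * Polynomial.X)

/-- The `q`-difference operator on `ℂ[z]`: `(D f)(z) = (f(z) - f(qz)) / ((1-q) z)`.
Since `f - σ f` has zero constant term, the division by `z` is exact and given by `divX`. -/
def qdiff (q : ℂ) (f : Polynomial ℂ) : Polynomial ℂ :=
  Polynomial.C (1 - q)⁻¹ * (f - qscale q f).divX

/-- The `q`-number `[m]_q = 1 + q + ⋯ + q ^ (m - 1)`, the factor in `D zᵐ = [m]_q zᵐ⁻¹`. The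
geometric sum replaces the quotient `(1 - q ^ m) / (1 - q)` so that no division is needed. -/
def qNumber {R : Type*} [Semiring R] (q : R) (m : ℕ) : R :=
  ∑ i ∈ Finset.range m, q ^ i

theorem one_sub_mul_qNumber {R : Type*} [Ring R] (q : R) (m : ℕ) :
    (1 - q) * qNumber q m = 1 - q ^ m :=
  mul_neg_geom_sum q m

theorem qNumber_eq_zero_of_dvd {R : Type*} [Ring R] [NoZeroDivisors R] {q : R} (hq : q ≠ 1)
    {n m : ℕ} (hqn : q ^ n = 1) (hnm : n ∣ m) : qNumber q m = 0 := by
  have hqm : q ^ m = 1 := by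
    obtain ⟨c, rfl⟩ := hnm
    rw [pow_mul, hqn, one_pow]
  have hprod : (1 - q) * qNumber q m = 0 := by rw [one_sub_mul_qNumber, hqm, sub_self]
  exact (mul_eq_zero.mp hprod).resolve_left (sub_ne_zero.mpr hq.symm)

theorem exists_lt_dvd_add {n : ℕ} (hn : n ≠ 0) (a : ℕ) : ∃ i < n, n ∣ a + i := by
  obtain ⟨i, hi, hmod⟩ := Int.existsUnique_equiv_nat (-a : ℤ) (b := n) (by positivity)
  have hdvd : (n : ℤ) ∣ a + i := by
    simpa only [sub_neg_eq_add, add_comm] using hmod.symm.dvd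
  exact ⟨i, mod_cast hi, mod_cast hdvd⟩

theorem coeff_qscale (q : ℂ) (f : Polynomial ℂ) (k : ℕ) :
    (qscale q f).coeff k = f.coeff k * q ^ k :=
  Polynomial.comp_C_mul_X_coeff

theorem coeff_qdiff {q : ℂ} (hq : q ≠ 1) (f : Polynomial ℂ) (k : ℕ) :
    (qdiff q f).coeff k = qNumber q (k + 1) * f.coeff (k + 1) := by
  have hq' : 1 - q ≠ 0 := sub_ne_zero.mpr hq.symm
  calc (qdiff q f).coeff k
      = (1 - q)⁻¹ * (f.coeff (k + 1) - f.coeff (k + 1) * q ^ (k + 1)) := by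
        rw [qdiff, Polynomial.coeff_C_mul, Polynomial.coeff_divX, Polynomial.coeff_sub,
          coeff_qscale]
    _ = (1 - q)⁻¹ * ((1 - q ^ (k + 1)) * f.coeff (k + 1)) := by ring
    _ = qNumber q (k + 1) * f.coeff (k + 1) := by
        rw [← one_sub_mul_qNumber, mul_assoc, inv_mul_cancel_left₀ hq']

theorem coeff_iterate_qdiff {q : ℂ} (hq : q ≠ 1) (m : ℕ) (f : Polynomial ℂ) (k : ℕ) :
    ((qdiff q)^[m] f).coeff k =
      (∏ i ∈ Finset.range m, qNumber q (k + 1 + i)) * f.coeff (k + m) := by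
  induction m generalizing f with
  | zero => simp
  | succ m ih =>
    rw [Function.iterate_succ_apply, ih, coeff_qdiff hq, Finset.prod_range_succ, mul_assoc,
      add_right_comm k m 1, add_right_comm k 1 m, add_assoc k m 1]

theorem qdiff_pow_primitive_root_eq_zero_general {n : ℕ} (hn : n ≠ 0) {q : ℂ} (hq : q ≠ 1)
    (hqn : q ^ n = 1) (f : Polynomial ℂ) : (qdiff q)^[n] f = 0 := by
  ext k
  obtain ⟨i, hi, hdvd⟩ := exists_lt_dvd_add hn (k + 1)
  have hprod : ∏ i ∈ Finset.range n, qNumber q (k + 1 + i) = 0 :=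
    Finset.prod_eq_zero (Finset.mem_range.mpr hi) (qNumber_eq_zero_of_dvd hq hqn hdvd)
  rw [coeff_iterate_qdiff hq, hprod, zero_mul, Polynomial.coeff_zero]

/-- If `q` is a primitive `n`-th root of unity with `n ≥ 2`, then the `n`-th power of the
`q`-difference operator annihilates every polynomial: `Dⁿ f = 0` for all `f ∈ ℂ[z]`. -/
theorem qdiff_pow_primitive_root_eq_zero
    (n : ℕ) (hn : 2 ≤ n) (q : ℂ) (hq1 : q ^ n = 1)
    (hq2 : ∀ d : ℕ, 0 < d → d < n → q ^ d ≠ 1)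
    (f : Polynomial ℂ) :
    (qdiff q)^[n] f = 0 := by
  have hq : q ≠ 1 := by simpa only [pow_one] using hq2 1 one_pos hn
  exact qdiff_pow_primitive_root_eq_zero_general (by omega) hq hq1 f
end
end

section
/- Let f ∈ ℝ[x,y,z] be a real polynomial in three variables. Then f satisfies the four conditions (i) f(−x,−y,z) = f(x,y,z), (ii) z·∂f/∂y + x·∂f/∂z = 0, (iii) z·∂f/∂x + y·∂f/∂z = 0, and (iv) x·∂f/∂x − y·∂f/∂y = 0, if and only if f is a polynomial in xy − z²/2, i.e. there exists a one-variable polynomial p ∈ ℝ[t] such that f(x,y,z) = p(xy − z²/2). -/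
open MvPolynomial

/-!
The line `t ↦ (t, 1, 0)` is a section of `xy - z²/2`, so a polynomial `f = p(xy - z²/2)` must have
`p(t) = f(t, 1, 0)`. Conversely, with this `p`, the difference `g = f - p(xy - z²/2)` satisfies the
same linear equations as `f` and vanishes on the line. The equation `x ∂g/∂x = y ∂g/∂y` says that
only monomials `xᵃyᵃzᶜ` occur in `g`, so `g(t, 1, 0) = 0` forces `g(x, y, 0) = 0`; the equation
`z ∂g/∂y + x ∂g/∂z = 0` determines the coefficients of `zᶜ⁺¹` from those of `zᶜ⁻¹`, so `g = 0`.
-/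

namespace PoissonCenter

section Coefficients

variable {σ R : Type*}

theorem coeff_X_mul_pderiv [CommSemiring R] (i : σ) (m : σ →₀ ℕ) (f : MvPolynomial σ R) :
    coeff m (X i * pderiv i f) = m i • coeff m f := by
  classical
  induction f using MvPolynomial.induction_on' with
  | monomial s a =>
    rw [X_mul_pderiv_monomial, coeff_smul, coeff_monomial]
    split_ifs with hsm
    · rw [hsm]
    · rw [smul_zero, smul_zero]
  | add p q hp hq => rw [map_add, mul_add, coeff_add, coeff_add, hp, hq, smul_add]

theorem apply_eq_apply_of_X_mul_pderiv_eq [CommRing R] [IsAddTorsionFree R] {i j : σ}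
    {f : MvPolynomial σ R} (hf : X i * pderiv i f = X j * pderiv j f) {m : σ →₀ ℕ}
    (hm : coeff m f ≠ 0) : m i = m j := by
  have hsmul : (m i : ℤ) • coeff m f = (m j : ℤ) • coeff m f := by
    simpa only [coeff_X_mul_pderiv, natCast_zsmul] using congrArg (coeff m) hf
  rw [← sub_eq_zero, ← sub_smul, IsAddTorsionFree.zsmul_eq_zero_iff_left hm] at hsmul
  lia

theorem eq_zero_of_X_mul_pderiv_add_X_mul_pderiv_eq_zero [CommSemiring R] [IsAddTorsionFree R]
    {i j k : σ} (hik : i ≠ k) (hjk : j ≠ k) {f : MvPolynomial σ R}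
    (hf : X k * pderiv j f + X i * pderiv k f = 0)
    (hf₀ : ∀ m : σ →₀ ℕ, m k = 0 → coeff m f = 0) : f = 0 := by
  classical
  suffices hcoeff : ∀ n, ∀ m : σ →₀ ℕ, m k = n → coeff m f = 0 from
    MvPolynomial.ext _ _ fun m ↦ hcoeff (m k) m rfl
  intro n
  induction n using Nat.strong_induction_on with
  | _ n ih =>
    intro m hmk
    rcases Nat.eq_zero_or_pos n with rfl | hn
    · exact hf₀ m hmk
    obtain ⟨d, rfl⟩ : ∃ d, m = d + Finsupp.single k 1 :=
      ⟨_, (Finsupp.sub_add_single_one_cancel (by lia)).symm⟩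
    have hlower : coeff (Finsupp.single i 1 + d) (X k * pderiv j f) = 0 := by
      rw [coeff_X_mul']
      split_ifs
      · rw [coeff_pderiv, ih (d k - 1), zero_mul]
        · simp only [Finsupp.add_apply, Finsupp.single_eq_same] at hmk
          lia
        · simp [hik.symm, hjk.symm]
      · rfl
    have hrec : (d k + 1) • coeff (d + Finsupp.single k 1) f = 0 := by
      have := congrArg (coeff (Finsupp.single i 1 + d)) hf
      rwa [coeff_add, hlower, zero_add, coeff_X_mul, coeff_pderiv, coeff_zero, mul_comm,
        ← Nat.cast_succ, ← nsmul_eq_mul] at this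
    exact (nsmul_eq_zero_iff_right (d k).succ_ne_zero).1 hrec

end Coefficients

theorem derivation_aeval_eq_zero {R A M : Type*} [CommSemiring R] [CommSemiring A] [Algebra R A]
    [AddCommMonoid M] [Module A M] [Module R M] {D : Derivation R A M} {a : A} (ha : D a = 0)
    (p : Polynomial R) : D (Polynomial.aeval a p) = 0 := by
  rw [Derivation.map_aeval, ha, smul_zero]

section Slice

variable {R : Type*} [CommSemiring R]

/-- The restriction `f ↦ f(t, 1, 0)` to a line transverse to the level sets of the Casimir
`xy - z²/2`, on which the Casimir itself becomes the coordinate `t`. -/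
noncomputable def slice : MvPolynomial (Fin 3) R →ₐ[R] Polynomial R :=
  aeval ![Polynomial.X, 1, 0]

theorem coeff_slice_eq_sum (f : MvPolynomial (Fin 3) R) (n : ℕ) :
    (slice f).coeff n = ∑ d ∈ f.support, if d 0 = n ∧ d 2 = 0 then coeff d f else 0 := by
  rw [slice, aeval_def, eval₂_eq', Polynomial.finsetSum_coeff]
  refine Finset.sum_congr rfl fun d _ ↦ ?_
  rcases eq_or_ne (d 2) 0 with hd | hd <;>
    simp [Fin.prod_univ_three, hd, Polynomial.coeff_X_pow, eq_comm]

theorem coeff_slice {f : MvPolynomial (Fin 3) R} (hf : ∀ m, coeff m f ≠ 0 → m 0 = m 1)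
    {m : Fin 3 →₀ ℕ} (hm : m 0 = m 1) (hm₂ : m 2 = 0) :
    (slice f).coeff (m 0) = coeff m f := by
  rw [coeff_slice_eq_sum, Finset.sum_eq_single m, if_pos ⟨rfl, hm₂⟩]
  · intro d hd hdm
    refine if_neg fun ⟨hd₀, hd₂⟩ ↦ hdm ?_
    have hd₁ := hf d (mem_support_iff.1 hd)
    ext i
    fin_cases i
    exacts [hd₀, (hd₁.symm.trans hd₀).trans hm, hd₂.trans hm₂.symm]
  · intro hmf
    rw [if_pos ⟨rfl, hm₂⟩, notMem_support_iff.1 hmf]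

end Slice

section Casimir

variable {R : Type*} [CommRing R]

variable (R) in
/-- The derivation `{x, ·} = z ∂/∂y + x ∂/∂z` for the Poisson bivector
`z ∂x ∧ ∂y + x ∂x ∧ ∂z - y ∂y ∧ ∂z`, whose kernel is the Poisson centralizer of `x`. -/
noncomputable def bracketX : Derivation R (MvPolynomial (Fin 3) R) (MvPolynomial (Fin 3) R) :=
  (X 2 : MvPolynomial (Fin 3) R) • pderiv 1 + (X 0 : MvPolynomial (Fin 3) R) • pderiv 2

variable (R) in
/-- The derivation `-{y, ·} = z ∂/∂x + y ∂/∂z` for the Poisson bivector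
`z ∂x ∧ ∂y + x ∂x ∧ ∂z - y ∂y ∧ ∂z`, whose kernel is the Poisson centralizer of `y`. -/
noncomputable def negBracketY : Derivation R (MvPolynomial (Fin 3) R) (MvPolynomial (Fin 3) R) :=
  (X 2 : MvPolynomial (Fin 3) R) • pderiv 0 + (X 1 : MvPolynomial (Fin 3) R) • pderiv 2

variable (R) in
/-- The derivation `-{z, ·} = x ∂/∂x - y ∂/∂y` for the Poisson bivector
`z ∂x ∧ ∂y + x ∂x ∧ ∂z - y ∂y ∧ ∂z`, whose kernel is the Poisson centralizer of `z`. -/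
noncomputable def negBracketZ : Derivation R (MvPolynomial (Fin 3) R) (MvPolynomial (Fin 3) R) :=
  (X 0 : MvPolynomial (Fin 3) R) • pderiv 0 - (X 1 : MvPolynomial (Fin 3) R) • pderiv 1

theorem eq_zero_of_slice_eq_zero [IsAddTorsionFree R] {f : MvPolynomial (Fin 3) R}
    (hx : bracketX R f = 0) (hz : negBracketZ R f = 0) (hf : slice f = 0) : f = 0 := by
  have hweight (m : Fin 3 →₀ ℕ) (hm : coeff m f ≠ 0) : m 0 = m 1 :=
    apply_eq_apply_of_X_mul_pderiv_eq (sub_eq_zero.1 hz) hm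
  refine eq_zero_of_X_mul_pderiv_add_X_mul_pderiv_eq_zero (i := 0) (j := 1) (k := 2)
    (by decide) (by decide) hx fun m hm₂ ↦ ?_
  by_contra hm
  refine hm ?_
  rw [← coeff_slice hweight (hweight m hm) hm₂, hf, Polynomial.coeff_zero]

variable [Invertible (2 : R)]

variable (R) in
/-- The Casimir `xy - z²/2` of the linear Poisson structure
`z ∂x ∧ ∂y + x ∂x ∧ ∂z - y ∂y ∧ ∂z`. -/
noncomputable def casimir : MvPolynomial (Fin 3) R :=
  X 0 * X 1 - C ⅟2 * X 2 ^ 2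

theorem pderiv_zero_casimir : pderiv 0 (casimir R) = X 1 := by
  simp [casimir, pderiv_X]

theorem pderiv_one_casimir : pderiv 1 (casimir R) = X 0 := by
  simp [casimir, pderiv_X]

theorem pderiv_two_casimir : pderiv 2 (casimir R) = -X 2 := by
  have hhalf : (C ⅟2 : MvPolynomial (Fin 3) R) * 2 = 1 := by
    rw [← map_ofNat C 2, ← C_mul, invOf_mul_self, C_1]
  simp [casimir, pderiv_X, ← mul_assoc, hhalf]

theorem bracketX_casimir : bracketX R (casimir R) = 0 := by
  simp [bracketX, pderiv_one_casimir, pderiv_two_casimir, mul_comm]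

theorem negBracketY_casimir : negBracketY R (casimir R) = 0 := by
  simp [negBracketY, pderiv_zero_casimir, pderiv_two_casimir, mul_comm]

theorem negBracketZ_casimir : negBracketZ R (casimir R) = 0 := by
  simp [negBracketZ, pderiv_zero_casimir, pderiv_one_casimir, mul_comm]

theorem slice_casimir : slice (casimir R) = Polynomial.X := by
  simp [slice, casimir]

theorem aeval_neg_neg_casimir :
    aeval ![-X 0, -X 1, X 2] (casimir R) = casimir R := by
  simp [casimir, algebraMap_eq]

theorem slice_aeval_casimir (p : Polynomial R) : slice (Polynomial.aeval (casimir R) p) = p := by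
  rw [← Polynomial.aeval_algHom_apply, slice_casimir, Polynomial.aeval_X_left_apply]

theorem eq_aeval_casimir_slice [IsAddTorsionFree R] {f : MvPolynomial (Fin 3) R}
    (hx : bracketX R f = 0) (hz : negBracketZ R f = 0) :
    f = Polynomial.aeval (casimir R) (slice f) := by
  refine sub_eq_zero.1 (eq_zero_of_slice_eq_zero ?_ ?_ ?_)
  · rw [map_sub, hx, derivation_aeval_eq_zero bracketX_casimir, sub_zero]
  · rw [map_sub, hz, derivation_aeval_eq_zero negBracketZ_casimir, sub_zero]
  · rw [map_sub, slice_aeval_casimir, sub_self]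

end Casimir

end PoissonCenter

open PoissonCenter in
theorem poisson_center_iff_polynomial_in_casimir_general {R : Type*} [CommRing R]
    [IsAddTorsionFree R] [Invertible (2 : R)] (f : MvPolynomial (Fin 3) R) :
    [aeval ![-X 0, -X 1, X 2] f = f ∧
        X 2 * pderiv 1 f + X 0 * pderiv 2 f = 0 ∧
        X 2 * pderiv 0 f + X 1 * pderiv 2 f = 0 ∧
        X 0 * pderiv 0 f - X 1 * pderiv 1 f = 0,
      X 2 * pderiv 1 f + X 0 * pderiv 2 f = 0 ∧ X 0 * pderiv 0 f - X 1 * pderiv 1 f = 0,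
      ∃ p : Polynomial R, f = Polynomial.aeval (X 0 * X 1 - C ⅟2 * X 2 ^ 2) p].TFAE := by
  tfae_have 1 → 2 := fun ⟨_, hx, _, hz⟩ ↦ ⟨hx, hz⟩
  tfae_have 2 → 3 := fun ⟨hx, hz⟩ ↦ ⟨slice f, eq_aeval_casimir_slice hx hz⟩
  tfae_have 3 → 1 := by
    rintro ⟨p, rfl⟩
    refine ⟨?_, derivation_aeval_eq_zero bracketX_casimir p,
      derivation_aeval_eq_zero negBracketY_casimir p,
      derivation_aeval_eq_zero negBracketZ_casimir p⟩
    rw [← Polynomial.aeval_algHom_apply]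
    exact congrArg (Polynomial.aeval · p) aeval_neg_neg_casimir
  tfae_finish

/-- A real polynomial `f ∈ ℝ[x,y,z]` satisfies
(i) `f(-x,-y,z) = f(x,y,z)`, (ii) `z ∂f/∂y + x ∂f/∂z = 0`, (iii) `z ∂f/∂x + y ∂f/∂z = 0`,
(iv) `x ∂f/∂x - y ∂f/∂y = 0`, if and only if `f` is a polynomial in `xy - z²/2`.
(Variables: `x = X 0`, `y = X 1`, `z = X 2`.) -/
theorem poisson_center_iff_polynomial_in_casimir
    (f : MvPolynomial (Fin 3) ℝ) :
    (MvPolynomial.aeval ![-(X 0), -(X 1), X 2] f = f ∧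
     X 2 * MvPolynomial.pderiv 1 f + X 0 * MvPolynomial.pderiv 2 f = 0 ∧
     X 2 * MvPolynomial.pderiv 0 f + X 1 * MvPolynomial.pderiv 2 f = 0 ∧
     X 0 * MvPolynomial.pderiv 0 f - X 1 * MvPolynomial.pderiv 1 f = 0) ↔
    ∃ p : Polynomial ℝ,
      f = Polynomial.aeval (X 0 * X 1 - MvPolynomial.C (1 / 2 : ℝ) * X 2 ^ 2) p := by
  simpa only [invOf_eq_inv, one_div] using
    (poisson_center_iff_polynomial_in_casimir_general f).out 0 2
end
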